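/- (Exponential decay of superlevel sets of the Riesz potential) Let $\Omega\subseteq\mathbb{R}^n$ be open and bounded, $\delta_1,\delta_2\in(0,n]$, and $\eta\in(0,n)$. There exist constants $c_1,c_2>0$, independent of $f$, such that for every $f\in L^1_{loc}(\Omega)$ (extended by zero outside $\Omega$) with $\int_\Omega |f(y)|^{\delta_2/\eta}\,d\mathcal{H}^{\delta_2}_\infty \le 1$ and every $t>0$, $\mathcal{H}^{\delta_1}_\infty(\{x\in\Omega : I_\eta f(x)>t\}) \le c_1\exp\big(-c_2\,t^{n/(n-\eta)}\big)$. -/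

import Mathlib

open MeasureTheory Metric Set ENNReal

/-- δ-dimensional Hausdorff content via countable ball coverings. -/
noncomputable def hc (n : ℕ) (δ : ℝ) (E : Set (EuclideanSpace ℝ (Fin n))) : ℝ≥0∞ :=
  ⨅ (c : ℕ → EuclideanSpace ℝ (Fin n)) (r : ℕ → ℝ) (_ : ∀ i, 0 < r i)
    (_ : E ⊆ ⋃ i, ball (c i) (r i)), ∑' i, ENNReal.ofReal (r i ^ δ)

/-- Choquet integral of a nonnegative function over Ω with respect to `hc n δ`. -/
noncomputable def choquet (n : ℕ) (δ : ℝ) (Ω : Set (EuclideanSpace ℝ (Fin n)))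
    (f : EuclideanSpace ℝ (Fin n) → ℝ≥0∞) : ℝ≥0∞ :=
  ∫⁻ t in Ioi (0:ℝ), hc n δ {x | x ∈ Ω ∧ ENNReal.ofReal t < f x}

/-- Riesz potential of order η. -/
noncomputable def riesz (n : ℕ) (η : ℝ) (f : EuclideanSpace ℝ (Fin n) → ℝ)
    (x : EuclideanSpace ℝ (Fin n)) : ℝ≥0∞ :=
  ∫⁻ y, ENNReal.ofReal (|f y| / dist x y ^ ((n : ℝ) - η))

theorem hc_mono {n : ℕ} {δ : ℝ} {E F : Set (EuclideanSpace ℝ (Fin n))} (h : E ⊆ F) :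
    hc n δ E ≤ hc n δ F :=
  iInf_mono fun _ => iInf_mono fun _ => iInf_mono fun _ =>
    iInf_mono' fun hF => ⟨h.trans hF, le_rfl⟩

/-- Coverings indexed by an arbitrary countable type bound the content. -/
theorem hc_le_tsum {n : ℕ} {δ : ℝ} (hδ : 0 < δ) {ι : Type*} [Countable ι]
    {E : Set (EuclideanSpace ℝ (Fin n))} (c : ι → EuclideanSpace ℝ (Fin n)) (r : ι → ℝ)
    (hr : ∀ i, 0 < r i) (hE : E ⊆ ⋃ i, ball (c i) (r i)) :
    hc n δ E ≤ ∑' i, ENNReal.ofReal (r i ^ δ) := by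
  refine ENNReal.le_of_forall_pos_le_add fun ε hε _ => ?_
  obtain ⟨s, hs, hsum⟩ := ENNReal.exists_pos_sum_of_countable
    (ENNReal.coe_pos.2 hε).ne' ℕ
  obtain ⟨e⟩ : Nonempty (ℕ ≃ ι ⊕ ℕ) := nonempty_equiv_of_countable
  set c' : ι ⊕ ℕ → EuclideanSpace ℝ (Fin n) := Sum.elim c 0
  set r' : ι ⊕ ℕ → ℝ := Sum.elim r fun i => (s i : ℝ) ^ (1 / δ)
  have hr' : ∀ i, 0 < r' i := by
    rintro (i | i)
    · exact hr i
    · exact Real.rpow_pos_of_pos (NNReal.coe_pos.2 (hs i)) _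
  have hcov : E ⊆ ⋃ k, ball (c' (e k)) (r' (e k)) := fun x hx => by
    obtain ⟨i, hi⟩ := mem_iUnion.1 (hE hx)
    exact mem_iUnion.2 ⟨e.symm (Sum.inl i), by simpa [c', r'] using hi⟩
  calc hc n δ E ≤ ∑' k, ENNReal.ofReal (r' (e k) ^ δ) :=
        iInf_le_of_le (fun k => c' (e k)) <| iInf_le_of_le (fun k => r' (e k)) <|
          iInf_le_of_le (fun k => hr' (e k)) <| iInf_le_of_le hcov le_rfl
    _ = ∑' k, ENNReal.ofReal (r' k ^ δ) := e.tsum_eq fun k => ENNReal.ofReal (r' k ^ δ)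
    _ = ∑' i, ENNReal.ofReal (r i ^ δ) + ∑' i, (s i : ℝ≥0∞) := by
        rw [Summable.tsum_sum ENNReal.summable ENNReal.summable]
        congr 1
        refine tsum_congr fun i => ?_
        simp only [r', Sum.elim_inr]
        rw [← Real.rpow_mul (s i).coe_nonneg, one_div_mul_cancel hδ.ne', Real.rpow_one,
          ENNReal.ofReal_coe_nnreal]
    _ ≤ _ := by gcongr

theorem ENNReal.tsum_rpow_le_rpow_tsum {ι : Type*} (a : ι → ℝ≥0∞) {m : ℝ} (hm : 1 ≤ m) :
    ∑' i, a i ^ m ≤ (∑' i, a i) ^ m := by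
  have split (z : ℝ≥0∞) : z ^ m = z * z ^ (m - 1) := by
    conv_lhs => rw [← add_sub_cancel 1 m]
    rw [ENNReal.rpow_add_of_nonneg _ _ zero_le_one (sub_nonneg.2 hm), ENNReal.rpow_one]
  calc ∑' i, a i ^ m ≤ ∑' i, a i * (∑' i, a i) ^ (m - 1) := by
        refine ENNReal.tsum_le_tsum fun i => ?_
        rw [split]
        refine mul_le_mul_right (ENNReal.rpow_le_rpow ?_ ?_) _
        exacts [ENNReal.le_tsum i, sub_nonneg.2 hm]
    _ = _ := by rw [ENNReal.tsum_mul_right, ← split]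

theorem volume_ball_eq {n : ℕ} (x : EuclideanSpace ℝ (Fin n)) {r : ℝ} (hr : 0 < r) :
    volume (ball x r) = ENNReal.ofReal (r ^ (n : ℝ)) *
      volume (ball (0 : EuclideanSpace ℝ (Fin n)) 1) := by
  rw [Measure.addHaar_ball_of_pos _ _ hr, finrank_euclideanSpace_fin, Real.rpow_natCast]

/-- Lebesgue measure is controlled by a power of a lower-dimensional Hausdorff content. -/
theorem volume_le_hc_rpow {n : ℕ} {δ : ℝ} (hδ : 0 < δ) (hδn : δ ≤ n)
    (E : Set (EuclideanSpace ℝ (Fin n))) :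
    volume E ≤ volume (ball (0 : EuclideanSpace ℝ (Fin n)) 1) * hc n δ E ^ ((n : ℝ) / δ) := by
  set v := volume (ball (0 : EuclideanSpace ℝ (Fin n)) 1)
  have hv0 : v ≠ 0 := (measure_ball_pos _ _ one_pos).ne'
  have hvt : v ≠ ∞ := measure_ball_lt_top.ne
  have hm : 1 ≤ (n : ℝ) / δ := (one_le_div hδ).2 hδn
  have hm0 : 0 < (n : ℝ) / δ := by linarith
  suffices h : (volume E / v) ^ ((n : ℝ) / δ)⁻¹ ≤ hc n δ E by
    rw [ENNReal.rpow_inv_le_iff hm0, ENNReal.div_le_iff hv0 hvt] at h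
    rwa [mul_comm]
  refine le_iInf fun c => le_iInf fun r => le_iInf fun hr => le_iInf fun hE => ?_
  rw [ENNReal.rpow_inv_le_iff hm0, ENNReal.div_le_iff hv0 hvt]
  calc volume E ≤ ∑' i, volume (ball (c i) (r i)) :=
        (measure_mono hE).trans (measure_iUnion_le _)
    _ = (∑' i, ENNReal.ofReal (r i ^ δ) ^ ((n : ℝ) / δ)) * v := by
        rw [← ENNReal.tsum_mul_right]
        refine tsum_congr fun i => ?_
        rw [volume_ball_eq _ (hr i),
          ENNReal.ofReal_rpow_of_nonneg (Real.rpow_nonneg (hr i).le _) hm0.le,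
          ← Real.rpow_mul (hr i).le, mul_div_cancel₀ _ hδ.ne']
    _ ≤ _ := by
        gcongr
        exact ENNReal.tsum_rpow_le_rpow_tsum _ hm

/-- The Choquet integral of `|f| ^ (δ / η)` controls the Lebesgue `n / η`-integral. -/
theorem lintegral_rpow_le_of_choquet_le_one {n : ℕ} {δ η : ℝ} (hδ : 0 < δ) (hδn : δ ≤ n)
    (hη : 0 < η) {Ω : Set (EuclideanSpace ℝ (Fin n))} (hΩ : MeasurableSet Ω)
    {f : EuclideanSpace ℝ (Fin n) → ℝ} (hf : AEMeasurable f (volume.restrict Ω))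
    (hc1 : choquet n δ Ω (fun y => ENNReal.ofReal (|f y| ^ (δ / η))) ≤ 1) :
    ∫⁻ y in Ω, ENNReal.ofReal (|f y| ^ ((n : ℝ) / η)) ≤
      ENNReal.ofReal (n / δ) * volume (ball (0 : EuclideanSpace ℝ (Fin n)) 1) := by
  set v := volume (ball (0 : EuclideanSpace ℝ (Fin n)) 1)
  have hvt : v ≠ ∞ := measure_ball_lt_top.ne
  set m := (n : ℝ) / δ with hmdef
  have hm : 1 ≤ m := (one_le_div hδ).2 hδn
  set h : ℝ → ℝ≥0∞ := fun t =>
    hc n δ {x | x ∈ Ω ∧ ENNReal.ofReal t < ENNReal.ofReal (|f x| ^ (δ / η))} with hh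
  have hh1 : ∫⁻ t in Ioi (0 : ℝ), h t ≤ 1 := hc1
  have hanti : Antitone h := fun s t hst => hc_mono fun x hx =>
    ⟨hx.1, (ENNReal.ofReal_le_ofReal hst).trans_lt hx.2⟩
  have hth (t : ℝ) (ht : 0 < t) : h t * ENNReal.ofReal t ≤ 1 :=
    calc h t * ENNReal.ofReal t = ∫⁻ _ in Ioc (0 : ℝ) t, h t := by simp
      _ ≤ ∫⁻ s in Ioc (0 : ℝ) t, h s :=
          setLIntegral_mono' measurableSet_Ioc fun s hs => hanti hs.2
      _ ≤ ∫⁻ s in Ioi (0 : ℝ), h s := lintegral_mono_set Ioc_subset_Ioi_self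
      _ ≤ 1 := hh1
  have hpow (y) : |f y| ^ ((n : ℝ) / η) = (|f y| ^ (δ / η)) ^ m := by
    rw [← Real.rpow_mul (abs_nonneg _), hmdef]
    congr 1
    field_simp
  have hlayer := lintegral_rpow_eq_lintegral_meas_lt_mul (volume.restrict Ω)
    (f := fun y => |f y| ^ (δ / η))
    (Filter.Eventually.of_forall fun y => Real.rpow_nonneg (abs_nonneg _) _)
    ((hf.norm).pow_const (δ / η)) (p := m) (by linarith)
  simp_rw [hpow]
  rw [hlayer]
  gcongr
  calc ∫⁻ t in Ioi (0 : ℝ), volume.restrict Ω {a | t < |f a| ^ (δ / η)} *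
        ENNReal.ofReal (t ^ (m - 1))
      ≤ ∫⁻ t in Ioi (0 : ℝ), v * h t := by
        refine setLIntegral_mono' measurableSet_Ioi fun t (ht : 0 < t) => ?_
        have hvol : volume.restrict Ω {a | t < |f a| ^ (δ / η)} ≤ v * h t ^ m := by
          rw [Measure.restrict_apply' hΩ]
          refine le_trans (measure_mono ?_) (volume_le_hc_rpow hδ hδn _)
          exact fun x hx => ⟨hx.2, (ENNReal.ofReal_lt_ofReal_iff_of_nonneg ht.le).2 hx.1⟩
        have hsplit : h t ^ m = h t * h t ^ (m - 1) := by
          conv_lhs => rw [← add_sub_cancel 1 m]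
          rw [ENNReal.rpow_add_of_nonneg _ _ zero_le_one (sub_nonneg.2 hm), ENNReal.rpow_one]
        have hone : h t ^ (m - 1) * ENNReal.ofReal (t ^ (m - 1)) ≤ 1 := by
          rw [← ENNReal.ofReal_rpow_of_nonneg ht.le (sub_nonneg.2 hm),
            ← ENNReal.mul_rpow_of_nonneg _ _ (sub_nonneg.2 hm)]
          exact ENNReal.rpow_le_one (hth t ht) (sub_nonneg.2 hm)
        calc _ ≤ v * h t ^ m * ENNReal.ofReal (t ^ (m - 1)) := by gcongr
          _ = v * h t * (h t ^ (m - 1) * ENNReal.ofReal (t ^ (m - 1))) := by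
              rw [hsplit]; ring
          _ ≤ v * h t * 1 := by gcongr
          _ = _ := mul_one _
    _ = v * ∫⁻ t in Ioi (0 : ℝ), h t := lintegral_const_mul' _ _ hvt
    _ ≤ v := mul_le_of_le_one_right' hh1

/-- A Vitali covering estimate: if every point of `E` is the centre of a ball whose `δ`-th power
radius is dominated by its `μ`-measure, then the content of `E` is dominated by the total mass. -/
theorem hc_le_of_forall_exists_closedBall {n : ℕ} {δ : ℝ} (hδ : 0 < δ)
    (μ : Measure (EuclideanSpace ℝ (Fin n))) (C : ℝ≥0∞) {R : ℝ}
    {E : Set (EuclideanSpace ℝ (Fin n))}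
    (h : ∀ x ∈ E, ∃ ρ, 0 < ρ ∧ ρ ≤ R ∧ ENNReal.ofReal (ρ ^ δ) ≤ C * μ (closedBall x ρ)) :
    hc n δ E ≤ ENNReal.ofReal (5 ^ δ) * (C * μ univ) := by
  choose! ρ hρ hρR hρμ using h
  obtain ⟨u, huE, hdisj, hcov⟩ :=
    Vitali.exists_disjoint_subfamily_covering_enlargement_closedBall E id ρ R hρR 4 (by norm_num)
  have hu : u.Countable := hdisj.countable_of_nonempty_interior fun x hx =>
    ⟨x, ball_subset_interior_closedBall (mem_ball_self (hρ x (huE hx)))⟩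
  have := hu.to_subtype
  calc hc n δ E ≤ ∑' x : u, ENNReal.ofReal ((5 * ρ x) ^ δ) := by
        refine hc_le_tsum hδ (fun x : u => (x : EuclideanSpace ℝ (Fin n))) (fun x => 5 * ρ x)
          (fun x => mul_pos (by norm_num) (hρ x (huE x.2))) fun x hx => ?_
        obtain ⟨y, hy, hxy⟩ := hcov x hx
        have h1 := hxy (mem_closedBall_self (hρ x hx).le)
        have h2 := hρ y (huE hy)
        exact mem_iUnion.2 ⟨⟨y, hy⟩, closedBall_subset_ball (by linarith) h1⟩
    _ ≤ ∑' x : u, ENNReal.ofReal (5 ^ δ) * (C * μ (closedBall x (ρ x))) := by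
        refine ENNReal.tsum_le_tsum fun x => ?_
        rw [Real.mul_rpow (by norm_num) (hρ x (huE x.2)).le, ENNReal.ofReal_mul (by positivity)]
        gcongr
        exact hρμ x (huE x.2)
    _ = ENNReal.ofReal (5 ^ δ) * (C * ∑' x : u, μ (closedBall x (ρ x))) := by
        rw [ENNReal.tsum_mul_left, ENNReal.tsum_mul_left]
    _ ≤ _ := by
        gcongr
        exact tsum_measure_le_measure_univ
          (fun x => measurableSet_closedBall.nullMeasurableSet)
          fun x y hxy => (hdisj x.2 y.2 (Subtype.coe_injective.ne hxy)).aedisjoint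

/-- Hölder's inequality for the Riesz kernel on a dyadic annulus. -/
theorem setLIntegral_riesz_rpow_le {n : ℕ} {η : ℝ} (hη : 0 < η) (hηn : η < n)
    {g : EuclideanSpace ℝ (Fin n) → ℝ≥0∞} (hg : AEMeasurable g) (x : EuclideanSpace ℝ (Fin n))
    {ρ : ℝ} (hρ : 0 < ρ) {S : Set (EuclideanSpace ℝ (Fin n))} (hS : MeasurableSet S)
    (hSρ : ∀ y ∈ S, ρ / 2 ≤ dist x y ∧ dist x y < ρ) :
    (∫⁻ y in S, g y * ENNReal.ofReal (dist x y ^ ((n : ℝ) - η))⁻¹) ^ ((n : ℝ) / η) ≤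
      (ENNReal.ofReal (2 ^ (n : ℝ)) * volume (ball (0 : EuclideanSpace ℝ (Fin n)) 1)) ^
        (((n : ℝ) - η) / η) * ∫⁻ y in S, g y ^ ((n : ℝ) / η) := by
  set v := volume (ball (0 : EuclideanSpace ℝ (Fin n)) 1)
  have hn : (0 : ℝ) < n := hη.trans hηn
  have hnη : 0 < (n : ℝ) - η := sub_pos.2 hηn
  set p := (n : ℝ) / η with hp
  set q := (n : ℝ) / ((n : ℝ) - η) with hq
  have hp0 : 0 < p := div_pos hn hη
  have hq0 : 0 < q := div_pos hn hnη
  have hpq : p.HolderConjugate q := by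
    refine Real.holderConjugate_iff.2 ⟨(one_lt_div hη).2 hηn, ?_⟩
    rw [hp, hq]
    field_simp
    ring
  set w : EuclideanSpace ℝ (Fin n) → ℝ≥0∞ := fun y =>
    ENNReal.ofReal (dist x y ^ ((n : ℝ) - η))⁻¹ with hw
  have hwm : Measurable w := by fun_prop
  have hker : ∫⁻ y in S, w y ^ q ≤ ENNReal.ofReal (2 ^ (n : ℝ)) * v :=
    calc ∫⁻ y in S, w y ^ q ≤ ∫⁻ _ in S, ENNReal.ofReal ((ρ / 2) ^ (n : ℝ))⁻¹ := by
          refine setLIntegral_mono' hS fun y hy => ?_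
          have hd : 0 < dist x y := (half_pos hρ).trans_le (hSρ y hy).1
          rw [hw, ENNReal.ofReal_rpow_of_pos (by positivity), Real.inv_rpow (by positivity),
            ← Real.rpow_mul hd.le, hq, mul_div_cancel₀ _ hnη.ne']
          refine ENNReal.ofReal_le_ofReal (inv_anti₀ (by positivity) ?_)
          exact Real.rpow_le_rpow (by positivity) (hSρ y hy).1 hn.le
      _ = ENNReal.ofReal ((ρ / 2) ^ (n : ℝ))⁻¹ * volume S := by simp
      _ ≤ ENNReal.ofReal ((ρ / 2) ^ (n : ℝ))⁻¹ * (ENNReal.ofReal (ρ ^ (n : ℝ)) * v) := by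
          rw [← volume_ball_eq x hρ]
          gcongr
          exact fun y hy => mem_ball'.2 (hSρ y hy).2
      _ = _ := by
          rw [← mul_assoc, ← ENNReal.ofReal_mul (by positivity), Real.div_rpow hρ.le (by norm_num)]
          congr 2
          field_simp
  have hhol := ENNReal.lintegral_mul_le_Lp_mul_Lq (volume.restrict S) hpq hg.restrict
    hwm.aemeasurable
  calc (∫⁻ y in S, g y * w y) ^ p
      ≤ ((∫⁻ y in S, g y ^ p) ^ (1 / p) * (ENNReal.ofReal (2 ^ (n : ℝ)) * v) ^ (1 / q)) ^ p := by
        refine ENNReal.rpow_le_rpow (hhol.trans ?_) hp0.le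
        gcongr
    _ = _ := by
        rw [ENNReal.mul_rpow_of_nonneg _ _ hp0.le, ← ENNReal.rpow_mul, ← ENNReal.rpow_mul,
          one_div_mul_cancel hp0.ne', ENNReal.rpow_one, mul_comm]
        congr 2
        rw [hp, hq]
        field_simp

/-- The dyadic annulus of outer radius `R / 2 ^ k` around `x`. -/
def dyadicAnnulus {n : ℕ} (x : EuclideanSpace ℝ (Fin n)) (R : ℝ) (k : ℕ) :
    Set (EuclideanSpace ℝ (Fin n)) :=
  {y | R / 2 ^ k / 2 ≤ dist x y ∧ dist x y < R / 2 ^ k}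

theorem measurableSet_dyadicAnnulus {n : ℕ} (x : EuclideanSpace ℝ (Fin n)) (R : ℝ) (k : ℕ) :
    MeasurableSet (dyadicAnnulus x R k) := by
  change MeasurableSet ({y | R / 2 ^ k / 2 ≤ dist x y} ∩ {y | dist x y < R / 2 ^ k})
  exact (measurableSet_le (by fun_prop) (by fun_prop)).inter
    (measurableSet_lt (by fun_prop) (by fun_prop))

theorem pairwise_disjoint_dyadicAnnulus {n : ℕ} (x : EuclideanSpace ℝ (Fin n)) {R : ℝ}
    (hR : 0 < R) : Pairwise (Function.onFun Disjoint (dyadicAnnulus x R)) := by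
  refine (pairwise_disjoint_on _).2 fun j k hjk => Set.disjoint_left.2 fun y hj hk => ?_
  have h : R / 2 ^ k ≤ R / 2 ^ (j + 1) := by
    gcongr
    · norm_num
    · exact hjk
  have h' : R / 2 ^ (j + 1) = R / 2 ^ j / 2 := by rw [pow_succ, div_div]
  linarith [hj.1, hk.2]

theorem exists_mem_dyadicAnnulus {n : ℕ} {x y : EuclideanSpace ℝ (Fin n)} {R : ℝ}
    (hxy : x ≠ y) (hR : dist x y < R) : ∃ k, y ∈ dyadicAnnulus x R k := by
  have hd : 0 < dist x y := dist_pos.2 hxy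
  have hR0 : 0 < R := hd.trans hR
  obtain ⟨k, hk, hk'⟩ := exists_nat_pow_near (x := R / dist x y) (y := 2)
    ((one_le_div hd).2 hR.le) one_lt_two
  have h2 : (0 : ℝ) < 2 ^ k := by positivity
  rw [le_div_iff₀ hd] at hk
  rw [div_lt_iff₀ hd, pow_succ] at hk'
  rcases hk.lt_or_eq with h | h
  · exact ⟨k, by rw [div_div, div_le_iff₀ (by positivity)]; linarith,
      by rw [lt_div_iff₀ h2]; linarith⟩
  · cases k with
    | zero => simp at h; linarith
    | succ j =>
      rw [pow_succ] at h
      have h2 : (0 : ℝ) < 2 ^ j := by positivity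
      exact ⟨j, by rw [div_div, div_le_iff₀ (by positivity)]; linarith,
        by rw [lt_div_iff₀ h2]; nlinarith⟩

theorem lintegral_riesz_eq_tsum_dyadicAnnulus {n : ℕ} {η : ℝ} (hηn : η < n)
    {g : EuclideanSpace ℝ (Fin n) → ℝ≥0∞} {x : EuclideanSpace ℝ (Fin n)} {R : ℝ} (hR : 0 < R)
    (hg : ∀ y, R ≤ dist x y → g y = 0) :
    ∫⁻ y, g y * ENNReal.ofReal (dist x y ^ ((n : ℝ) - η))⁻¹ =
      ∑' k, ∫⁻ y in dyadicAnnulus x R k,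
        g y * ENNReal.ofReal (dist x y ^ ((n : ℝ) - η))⁻¹ := by
  rw [← lintegral_iUnion (measurableSet_dyadicAnnulus x R) (pairwise_disjoint_dyadicAnnulus x hR),
    ← lintegral_indicator (MeasurableSet.iUnion (measurableSet_dyadicAnnulus x R))]
  refine lintegral_congr fun y => ?_
  by_cases hy : y ∈ ⋃ k, dyadicAnnulus x R k
  · rw [indicator_of_mem hy]
  rw [indicator_of_notMem hy]
  rcases eq_or_ne x y with rfl | hxy
  · simp [Real.zero_rpow (sub_pos.2 hηn).ne']
  · rw [hg y, zero_mul]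
    by_contra! h
    exact hy (mem_iUnion.2 (exists_mem_dyadicAnnulus hxy h))

/-- If a series of nonnegative terms is large while its `p`-th powers are controlled by a summable
sequence, then some late term exceeds the corresponding term of a geometric series. -/
theorem exists_geometric_lt_of_lt_tsum {b ν : ℕ → ℝ≥0∞} {K M : ℝ≥0∞} {p t θ : ℝ} (hp : 1 ≤ p)
    (hθ0 : 0 ≤ θ) (hθ1 : θ < 1) (hb : ∀ k, b k ^ p ≤ K * ν k) (hν : ∑' k, ν k ≤ M) {N : ℕ}
    (hN : (N : ℝ≥0∞) ^ (p - 1) * (K * M) ≤ ENNReal.ofReal (t / 2) ^ p) (ht : 2 ≤ t)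
    (hlt : ENNReal.ofReal t < ∑' k, b k) :
    ∃ k, ENNReal.ofReal ((1 - θ) * θ ^ k) < b (k + N) := by
  by_contra! hcon
  have hp0 : 0 < p := by linarith
  have hhead : ∑ k ∈ Finset.range N, b k ≤ ENNReal.ofReal (t / 2) := by
    rw [← ENNReal.rpow_le_rpow_iff hp0]
    calc _ ≤ ((Finset.range N).card : ℝ≥0∞) ^ (p - 1) * ∑ k ∈ Finset.range N, b k ^ p :=
          ENNReal.rpow_sum_le_const_mul_sum_rpow _ _ hp
      _ ≤ (N : ℝ≥0∞) ^ (p - 1) * (K * M) := by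
          rw [Finset.card_range]
          gcongr
          calc _ ≤ ∑ k ∈ Finset.range N, K * ν k := Finset.sum_le_sum fun k _ => hb k
            _ = K * ∑ k ∈ Finset.range N, ν k := by rw [Finset.mul_sum]
            _ ≤ K * M := by
                gcongr
                exact (ENNReal.sum_le_tsum _).trans hν
      _ ≤ _ := hN
  have htail : ∑' k, b (k + N) ≤ ENNReal.ofReal (t / 2) :=
    calc _ ≤ ∑' k, ENNReal.ofReal ((1 - θ) * θ ^ k) := ENNReal.tsum_le_tsum hcon
      _ = ENNReal.ofReal (∑' k, (1 - θ) * θ ^ k) :=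
          (ENNReal.ofReal_tsum_of_nonneg
            (fun k => mul_nonneg (sub_nonneg.2 hθ1.le) (pow_nonneg hθ0 k))
            ((summable_geometric_of_lt_one hθ0 hθ1).mul_left _)).symm
      _ = 1 := by
          rw [tsum_mul_left, tsum_geometric_of_lt_one hθ0 hθ1,
            mul_inv_cancel₀ (sub_pos.2 hθ1).ne', ENNReal.ofReal_one]
      _ ≤ _ := ENNReal.one_le_ofReal.2 (by linarith)
  refine hlt.not_ge ?_
  rw [← ENNReal.summable.sum_add_tsum_nat_add' (k := N)]
  refine (add_le_add hhead htail).trans_eq ?_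
  rw [← ENNReal.ofReal_add (by linarith) (by linarith), add_halves]

/-- A large Riesz potential produces a small ball on which the `n / η`-energy is concentrated. -/
theorem exists_closedBall_of_lt_lintegral_riesz {n : ℕ} {δ η : ℝ} (hδ : 0 < δ) (hη : 0 < η)
    (hηn : η < n) {K M R t : ℝ} (hR : 0 < R)
    (hKv : ENNReal.ofReal K = (ENNReal.ofReal (2 ^ (n : ℝ)) *
      volume (ball (0 : EuclideanSpace ℝ (Fin n)) 1)) ^ (((n : ℝ) - η) / η))
    {g : EuclideanSpace ℝ (Fin n) → ℝ≥0∞} (hg : AEMeasurable g)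
    (hgM : ∫⁻ y, g y ^ ((n : ℝ) / η) ≤ ENNReal.ofReal M) {x : EuclideanSpace ℝ (Fin n)}
    (hgx : ∀ y, R ≤ dist x y → g y = 0) {N : ℕ}
    (hN : (N : ℝ≥0∞) ^ ((n : ℝ) / η - 1) * (ENNReal.ofReal K * ENNReal.ofReal M) ≤
      ENNReal.ofReal (t / 2) ^ ((n : ℝ) / η)) (ht : 2 ≤ t)
    (hlt : ENNReal.ofReal t < ∫⁻ y, g y * ENNReal.ofReal (dist x y ^ ((n : ℝ) - η))⁻¹) :
    ∃ ρ, 0 < ρ ∧ ρ ≤ R ∧ ENNReal.ofReal (ρ ^ δ) ≤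
      ENNReal.ofReal (R ^ δ * 2 ^ (-δ * N) * (1 - 2 ^ (-δ * η / n)) ^ (-((n : ℝ) / η)) * K) *
        volume.withDensity (fun y => g y ^ ((n : ℝ) / η)) (closedBall x ρ) := by
  have hn : (0 : ℝ) < n := hη.trans hηn
  set p := (n : ℝ) / η with hp
  have hp1 : 1 < p := (one_lt_div hη).2 hηn
  have hp0 : 0 < p := by linarith
  set θ : ℝ := 2 ^ (-δ * η / n) with hθ
  have hθ0 : 0 < θ := by positivity
  have hθ1 : θ < 1 := Real.rpow_lt_one_of_one_lt_of_neg one_lt_two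
    (div_neg_of_neg_of_pos (by nlinarith) hn)
  have hθ1' : 0 < 1 - θ := sub_pos.2 hθ1
  rw [lintegral_riesz_eq_tsum_dyadicAnnulus hηn hR hgx] at hlt
  have hb (k : ℕ) : (∫⁻ y in dyadicAnnulus x R k,
      g y * ENNReal.ofReal (dist x y ^ ((n : ℝ) - η))⁻¹) ^ p ≤
      ENNReal.ofReal K * ∫⁻ y in dyadicAnnulus x R k, g y ^ p := by
    rw [hKv]
    exact setLIntegral_riesz_rpow_le hη hηn hg x (by positivity)
      (measurableSet_dyadicAnnulus x R k) fun y hy => hy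
  have hν : ∑' k, ∫⁻ y in dyadicAnnulus x R k, g y ^ p ≤ ENNReal.ofReal M := by
    rw [← lintegral_iUnion (measurableSet_dyadicAnnulus x R)
      (pairwise_disjoint_dyadicAnnulus x hR)]
    exact (setLIntegral_le_lintegral _ _).trans hgM
  obtain ⟨k, hk⟩ := exists_geometric_lt_of_lt_tsum hp1.le hθ0.le hθ1 hb hν hN ht hlt
  refine ⟨R / 2 ^ (k + N), by positivity,
    div_le_self hR.le (one_le_pow₀ one_le_two), ?_⟩
  have hmass : ENNReal.ofReal (((1 - θ) * θ ^ k) ^ p) ≤ ENNReal.ofReal K *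
      volume.withDensity (fun y => g y ^ p) (closedBall x (R / 2 ^ (k + N))) := by
    rw [← ENNReal.ofReal_rpow_of_nonneg (by positivity) hp0.le,
      withDensity_apply _ measurableSet_closedBall]
    refine (ENNReal.rpow_le_rpow hk.le hp0.le).trans ((hb (k + N)).trans ?_)
    gcongr
    exact fun y hy => mem_closedBall'.2 hy.2.le
  have hrad : (R / 2 ^ (k + N)) ^ δ =
      R ^ δ * 2 ^ (-δ * N) * (1 - θ) ^ (-p) * ((1 - θ) * θ ^ k) ^ p := by
    have hθk : (θ ^ k) ^ p = (2 : ℝ) ^ (-δ * k) := by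
      rw [hθ, ← Real.rpow_natCast, ← Real.rpow_mul two_pos.le, ← Real.rpow_mul two_pos.le, hp]
      congr 1
      field_simp
    rw [Real.mul_rpow hθ1'.le (by positivity), hθk, Real.rpow_neg hθ1'.le,
      Real.div_rpow hR.le (by positivity), ← Real.rpow_natCast, ← Real.rpow_mul two_pos.le,
      div_eq_mul_inv, ← Real.rpow_neg two_pos.le]
    have hpos : (1 - θ) ^ p ≠ 0 := by positivity
    have hexp : (2 : ℝ) ^ (-(((k + N : ℕ) : ℝ) * δ)) = 2 ^ (-δ * N) * 2 ^ (-δ * k) := by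
      rw [← Real.rpow_add two_pos]
      congr 1
      push_cast
      ring
    rw [hexp]
    field_simp
  have hc0 : 0 ≤ R ^ δ * 2 ^ (-δ * N) * (1 - θ) ^ (-p) := by positivity
  rw [hrad, ENNReal.ofReal_mul hc0, ENNReal.ofReal_mul hc0, mul_assoc (ENNReal.ofReal _)]
  exact mul_le_mul_right hmass _

/-- Exponential decay of the content of superlevel sets under an `L^{n / η}` bound. -/
theorem hc_lintegral_riesz_le {n : ℕ} {δ η : ℝ} (hδ : 0 < δ) (hη : 0 < η) (hηn : η < n)
    {Ω : Set (EuclideanSpace ℝ (Fin n))} (hΩb : Bornology.IsBounded Ω) {M : ℝ} (hM : 0 ≤ M) :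
    ∃ c₁ c₂ : ℝ, 0 < c₁ ∧ 0 < c₂ ∧ ∀ g : EuclideanSpace ℝ (Fin n) → ℝ≥0∞, AEMeasurable g →
      (∀ y ∉ Ω, g y = 0) → ∫⁻ y, g y ^ ((n : ℝ) / η) ≤ ENNReal.ofReal M → ∀ t : ℝ, 0 < t →
        hc n δ {x | x ∈ Ω ∧ ENNReal.ofReal t <
            ∫⁻ y, g y * ENNReal.ofReal (dist x y ^ ((n : ℝ) - η))⁻¹} ≤
          ENNReal.ofReal (c₁ * Real.exp (-c₂ * t ^ ((n : ℝ) / ((n : ℝ) - η)))) := by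
  have hn : (0 : ℝ) < n := hη.trans hηn
  have hnη : 0 < (n : ℝ) - η := sub_pos.2 hηn
  obtain ⟨r, hr, hΩr⟩ := hΩb.subset_ball_lt 0 0
  set R := 2 * r with hRdef
  have hR : 0 < R := by positivity
  have hΩR {x y} (hx : x ∈ Ω) (hy : y ∈ Ω) : dist x y < R := by
    have h1 := mem_ball.1 (hΩr hx)
    have h2 := mem_ball'.1 (hΩr hy)
    linarith [dist_triangle x 0 y]
  set v := volume (ball (0 : EuclideanSpace ℝ (Fin n)) 1)
  set K := ((ENNReal.ofReal (2 ^ (n : ℝ)) * v) ^ (((n : ℝ) - η) / η)).toReal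
  have hKv : ENNReal.ofReal K = (ENNReal.ofReal (2 ^ (n : ℝ)) * v) ^ (((n : ℝ) - η) / η) :=
    ENNReal.ofReal_toReal <| ENNReal.rpow_ne_top_of_nonneg (by positivity) <|
      ENNReal.mul_ne_top ENNReal.ofReal_ne_top measure_ball_lt_top.ne
  have hK : 0 ≤ K := ENNReal.toReal_nonneg
  set p := (n : ℝ) / η with hp
  set q := (n : ℝ) / ((n : ℝ) - η) with hq
  have hp1 : 0 < p - 1 := sub_pos.2 ((one_lt_div hη).2 hηn)
  have hp0 : 0 < p := by linarith
  have hq0 : 0 < q := by positivity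
  have hqp : q * (p - 1) = p := by
    rw [hp, hq]
    field_simp
  set a := ((1 / 2) ^ p / (K * M + 1)) ^ (1 / (p - 1)) with ha
  have ha0 : 0 < a := by positivity
  have haM : a ^ (p - 1) * (K * M) ≤ (1 / 2) ^ p := by
    rw [ha, ← Real.rpow_mul (by positivity), one_div_mul_cancel hp1.ne', Real.rpow_one,
      div_mul_eq_mul_div, div_le_iff₀ (by positivity)]
    gcongr
    linarith
  set θ : ℝ := 2 ^ (-δ * η / n) with hθ
  have hθ1 : 0 < 1 - θ := sub_pos.2 <| Real.rpow_lt_one_of_one_lt_of_neg one_lt_two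
    (div_neg_of_neg_of_pos (by nlinarith) hn)
  set c₂ := δ * a * Real.log 2 with hc₂
  have hc₂0 : 0 < c₂ := by positivity
  set A := 5 ^ δ * (R ^ δ * 2 ^ δ * (1 - θ) ^ (-p) * K * M) with hA
  have hA0 : 0 ≤ A := by positivity
  refine ⟨A + R ^ δ * Real.exp (c₂ * 2 ^ q), c₂, by positivity, hc₂0, ?_⟩
  intro g hg hgΩ hgM t ht
  rcases lt_or_ge t 2 with ht2 | ht2
  · calc hc n δ _ ≤ ∑' _ : Unit, ENNReal.ofReal (R ^ δ) := by
          refine hc_le_tsum hδ (fun _ => 0) (fun _ => R) (fun _ => hR) fun x hx => ?_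
          exact mem_iUnion.2 ⟨(), ball_subset_ball (by linarith) (hΩr hx.1)⟩
      _ = ENNReal.ofReal (R ^ δ) := by simp
      _ ≤ _ := by
          refine ENNReal.ofReal_le_ofReal ?_
          have hexp : 1 ≤ Real.exp (c₂ * 2 ^ q) * Real.exp (-c₂ * t ^ q) := by
            rw [← Real.exp_add, Real.one_le_exp_iff]
            have : t ^ q ≤ 2 ^ q := Real.rpow_le_rpow ht.le ht2.le hq0.le
            nlinarith
          calc R ^ δ = 0 + R ^ δ * 1 := by ring
            _ ≤ A * Real.exp (-c₂ * t ^ q) +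
                R ^ δ * (Real.exp (c₂ * 2 ^ q) * Real.exp (-c₂ * t ^ q)) := by
              gcongr
              positivity
            _ = _ := by ring
  set N := ⌊a * t ^ q⌋₊
  have hNle : (N : ℝ) ≤ a * t ^ q := Nat.floor_le (by positivity)
  have hNge : a * t ^ q - 1 ≤ N := (Nat.sub_one_lt_floor _).le
  have hN : (N : ℝ≥0∞) ^ (p - 1) * (ENNReal.ofReal K * ENNReal.ofReal M) ≤
      ENNReal.ofReal (t / 2) ^ p := by
    rw [← ENNReal.ofReal_natCast, ENNReal.ofReal_rpow_of_nonneg (by positivity) hp1.le,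
      ENNReal.ofReal_rpow_of_nonneg (by positivity) hp0.le, ← ENNReal.ofReal_mul hK,
      ← ENNReal.ofReal_mul (by positivity)]
    refine ENNReal.ofReal_le_ofReal ?_
    calc (N : ℝ) ^ (p - 1) * (K * M) ≤ (a * t ^ q) ^ (p - 1) * (K * M) := by gcongr
      _ = t ^ p * (a ^ (p - 1) * (K * M)) := by
          rw [Real.mul_rpow ha0.le (by positivity), ← Real.rpow_mul ht.le, hqp]
          ring
      _ ≤ t ^ p * (1 / 2) ^ p := by gcongr
      _ = (t / 2) ^ p := by
          rw [← Real.mul_rpow ht.le (by norm_num), mul_one_div]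
  refine (hc_le_of_forall_exists_closedBall hδ (volume.withDensity fun y => g y ^ p)
    (ENNReal.ofReal (R ^ δ * 2 ^ (-δ * N) * (1 - θ) ^ (-p) * K)) (R := R) fun x hx =>
      exists_closedBall_of_lt_lintegral_riesz hδ hη hηn hR hKv hg hgM
        (fun y hy => hgΩ y fun hyΩ => hy.not_gt (hΩR hx.1 hyΩ)) hN ht2 hx.2).trans ?_
  rw [withDensity_apply _ MeasurableSet.univ, Measure.restrict_univ]
  calc _ ≤ ENNReal.ofReal (5 ^ δ) * (ENNReal.ofReal (R ^ δ * 2 ^ (-δ * N) *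
        (1 - θ) ^ (-p) * K) * ENNReal.ofReal M) := by gcongr
    _ = ENNReal.ofReal (5 ^ δ * (R ^ δ * 2 ^ (-δ * N) * (1 - θ) ^ (-p) * K * M)) := by
        rw [← ENNReal.ofReal_mul (by positivity), ← ENNReal.ofReal_mul (by positivity)]
    _ ≤ _ := ENNReal.ofReal_le_ofReal ?_
  have hpow : (2 : ℝ) ^ (-δ * N) ≤ 2 ^ δ * Real.exp (-c₂ * t ^ q) := by
    rw [Real.rpow_def_of_pos two_pos, Real.rpow_def_of_pos two_pos, ← Real.exp_add,
      Real.exp_le_exp, hc₂]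
    have hlog : 0 < δ * Real.log 2 := by positivity
    nlinarith
  calc 5 ^ δ * (R ^ δ * 2 ^ (-δ * N) * (1 - θ) ^ (-p) * K * M)
      ≤ 5 ^ δ * (R ^ δ * (2 ^ δ * Real.exp (-c₂ * t ^ q)) * (1 - θ) ^ (-p) * K * M) := by
        gcongr
    _ = A * Real.exp (-c₂ * t ^ q) := by rw [hA]; ring
    _ ≤ _ := by
        gcongr
        exact le_add_of_nonneg_right (by positivity)

theorem stmt_18 (n : ℕ) (Ω : Set (EuclideanSpace ℝ (Fin n))) (hΩo : IsOpen Ω)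
    (hΩb : Bornology.IsBounded Ω) (δ₁ δ₂ η : ℝ)
    (h1 : 0 < δ₁) (h1n : δ₁ ≤ n) (h2 : 0 < δ₂) (h2n : δ₂ ≤ n) (hη : 0 < η) (hηn : η < n) :
    ∃ c₁ c₂ : ℝ, 0 < c₁ ∧ 0 < c₂ ∧
      ∀ f : EuclideanSpace ℝ (Fin n) → ℝ, LocallyIntegrableOn f Ω →
        choquet n δ₂ Ω (fun y => ENNReal.ofReal (|f y| ^ (δ₂ / η))) ≤ 1 →
        ∀ t : ℝ, 0 < t →
          hc n δ₁ {x | x ∈ Ω ∧ ENNReal.ofReal t < riesz n η (Ω.indicator f) x} ≤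
            ENNReal.ofReal (c₁ * Real.exp (-c₂ * t ^ ((n : ℝ) / ((n : ℝ) - η)))) := by
  have hn : (0 : ℝ) < n := hη.trans hηn
  obtain ⟨c₁, c₂, hc₁, hc₂, H⟩ := hc_lintegral_riesz_le h1 hη hηn hΩb
    (M := (ENNReal.ofReal (n / δ₂) * volume (ball (0 : EuclideanSpace ℝ (Fin n)) 1)).toReal)
    ENNReal.toReal_nonneg
  refine ⟨c₁, c₂, hc₁, hc₂, fun f hf hfc t ht => ?_⟩
  rw [ENNReal.ofReal_toReal
    (ENNReal.mul_ne_top ENNReal.ofReal_ne_top measure_ball_lt_top.ne)] at H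
  have hfm : AEMeasurable f (volume.restrict Ω) := hf.aestronglyMeasurable.aemeasurable
  have hgm : AEMeasurable fun y => ENNReal.ofReal |Ω.indicator f y| :=
    ((aemeasurable_indicator_iff hΩo.measurableSet).2 hfm).norm.ennreal_ofReal
  have hgp : ∫⁻ y, ENNReal.ofReal |Ω.indicator f y| ^ ((n : ℝ) / η) ≤
      ENNReal.ofReal (n / δ₂) * volume (ball (0 : EuclideanSpace ℝ (Fin n)) 1) := by
    refine le_trans (le_of_eq ?_)
      (lintegral_rpow_le_of_choquet_le_one h2 h2n hη hΩo.measurableSet hfm hfc)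
    rw [← lintegral_indicator hΩo.measurableSet]
    refine lintegral_congr fun y => ?_
    have hp : 0 < (n : ℝ) / η := div_pos hn hη
    by_cases hy : y ∈ Ω
    · simp only [indicator_of_mem hy]
      rw [ENNReal.ofReal_rpow_of_nonneg (abs_nonneg _) hp.le]
    · simp [indicator_of_notMem hy, hp]
  have := H _ hgm (fun y hy => by simp [indicator_of_notMem hy]) hgp t ht
  simpa only [riesz, div_eq_mul_inv, ENNReal.ofReal_mul (abs_nonneg _)] using this
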